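/- Let n ≥ 2 and let G be the edge-colored multigraph encoded by ctr : Fin (n-1) → Fin n, and suppose ctr is constant. Consider the action of the symmetric group on Fin (n-1) on the set of decompositions of G into n-1 pairwise edge-disjoint rainbow spanning stars given by permuting the index i (σ · w = fun i c ↦ w (σ i) c). Then the number of orbits (i.e., the number of unordered collections of n-1 disjoint rainbow spanning stars decomposing G) equals L (n-1) / (n-1)!, and (n-1)! divides L (n-1). -/

import Mathlib

/-!
When every color class is the star centered at `z`, a decomposition `w` takes values in the
`n - 1` vertices other than `z`. Each row `w i` is injective because the edges of the `i`-th tree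
are distinct, and each column is a bijection onto the vertices other than `z`; so, after naming
these vertices by `Fin (n-1)`, `w` is a Latin square. Conversely every Latin square gives a star
decomposition, as a bijective row makes the `i`-th tree equal to the star graph centered at `z`
(`isStarDecomp_iff_isLatinSquare`).

The bijection matches the reindexing of trees with the permutation of rows. The latter action is
free, since the entries in a fixed column of a Latin square are distinct; hence the number of
Latin squares is the number of orbits times `(n-1)!` (`L_eq_card_quot_mul_factorial`).
-/

/-- `w` is a decomposition of the edge-colored multigraph encoded by `ctr` into
`n-1` pairwise edge-disjoint rainbow spanning trees. -/
def IsTreeDecomp (n : ℕ) (ctr : Fin (n-1) → Fin n)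
    (w : Fin (n-1) → Fin (n-1) → Fin n) : Prop :=
  (∀ i c, w i c ≠ ctr c) ∧
  (∀ c, Function.Injective (fun i => w i c)) ∧
  (∀ c, ∀ v : Fin n, v ≠ ctr c → ∃ i, w i c = v) ∧
  (∀ i, Function.Injective (fun c => s(ctr c, w i c))) ∧
  (∀ i, (SimpleGraph.fromEdgeSet {e : Sym2 (Fin n) | ∃ c, e = s(ctr c, w i c)}).IsTree)

/-- `w` is a decomposition into `n-1` pairwise edge-disjoint rainbow spanning stars. -/
def IsStarDecomp (n : ℕ) (ctr : Fin (n-1) → Fin n)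
    (w : Fin (n-1) → Fin (n-1) → Fin n) : Prop :=
  IsTreeDecomp n ctr w ∧ ∀ i, ∃ z : Fin n, ∀ c, z ∈ s(ctr c, w i c)

/-- A Latin square of order `m`. -/
def IsLatinSquare {m : ℕ} (M : Fin m → Fin m → Fin m) : Prop :=
  (∀ i, Function.Bijective (M i)) ∧ (∀ j, Function.Bijective (fun i => M i j))

/-- `L m` is the number of Latin squares of order `m`. -/
noncomputable def L (m : ℕ) : ℕ := Nat.card {M : Fin m → Fin m → Fin m // IsLatinSquare M}

/-- Two Latin squares are related when the second arises from the first by permuting its rows. -/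
def RowPermuted {m : ℕ} (M M' : {M : Fin m → Fin m → Fin m // IsLatinSquare M}) : Prop :=
  ∃ σ : Equiv.Perm (Fin m), ∀ i c, M'.1 i c = M.1 (σ i) c

theorem IsLatinSquare.permuteRows {m : ℕ} {M : Fin m → Fin m → Fin m} (hM : IsLatinSquare M)
    (σ : Equiv.Perm (Fin m)) : IsLatinSquare (fun i => M (σ i)) :=
  ⟨fun i => hM.1 (σ i), fun j => (hM.2 j).comp σ.bijective⟩

/-- The left action of the symmetric group on Latin squares by permuting the rows; the inverse
turns precomposition into a left action. -/
@[reducible] def rowAction (m : ℕ) :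
    MulAction (Equiv.Perm (Fin m)) {M : Fin m → Fin m → Fin m // IsLatinSquare M} where
  smul σ M := ⟨fun i => M.1 (σ⁻¹ i), M.2.permuteRows σ⁻¹⟩
  one_smul _ := rfl
  mul_smul σ τ M := Subtype.ext (funext fun i => by
    change M.1 ((σ * τ)⁻¹ i) = M.1 (τ⁻¹ (σ⁻¹ i))
    rw [mul_inv_rev, Equiv.Perm.mul_apply])

/-- Row permutations act freely on Latin squares of positive order, so all orbits have `m!`
elements. -/
theorem L_eq_card_quot_mul_factorial {m : ℕ} (hm : 0 < m) :
    L m = Nat.card (Quot (RowPermuted (m := m))) * Nat.factorial m := by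
  let := rowAction m
  have hfree : ∀ M : {M : Fin m → Fin m → Fin m // IsLatinSquare M},
      MulAction.stabilizer (Equiv.Perm (Fin m)) M = ⊥ := by
    intro M
    refine (Subgroup.eq_bot_iff_forall _).2 fun σ hσ => ?_
    have h : ∀ i, M.1 (σ⁻¹ i) = M.1 i := congrFun (congrArg Subtype.val hσ)
    -- The entries of column `0` are distinct, so `σ⁻¹` fixes every row index.
    have h1 : σ⁻¹ = 1 :=
      Equiv.ext fun i => (M.2.2 ⟨0, hm⟩).1 (congrFun (h i) ⟨0, hm⟩)
    exact inv_eq_one.1 h1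
  have hQ : Nat.card (Quot (RowPermuted (m := m))) =
      Nat.card (MulAction.orbitRel.Quotient (Equiv.Perm (Fin m))
        {M : Fin m → Fin m → Fin m // IsLatinSquare M}) := by
    -- `M'` is `M` permuted by `σ` exactly when `M = σ • M'`.
    refine Nat.card_congr (Quot.congrRight fun M M' => ?_)
    constructor
    · rintro ⟨σ, h⟩
      refine ⟨σ, Subtype.ext (funext fun i => funext fun c => ?_)⟩
      change M'.1 (σ⁻¹ i) c = M.1 i c
      simp [h]
    · rintro ⟨σ, rfl⟩
      refine ⟨σ, fun i c => ?_⟩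
      change M'.1 i c = M'.1 (σ⁻¹ (σ i)) c
      simp
  rw [hQ, L, Nat.card_congr (MulAction.selfEquivOrbitsQuotientProd hfree), Nat.card_prod,
    Nat.card_perm, Nat.card_fin]

/-- If `f` enumerates the vertices other than `z`, the edges `{z, f c}` form the star graph
centered at `z`. -/
theorem fromEdgeSet_eq_starGraph {V ι : Type*} (z : V) (f : ι → V)
    (hf : ∀ v, v ≠ z → ∃ c, f c = v) (hz : ∀ c, f c ≠ z) :
    SimpleGraph.fromEdgeSet {e : Sym2 V | ∃ c, e = s(z, f c)} = SimpleGraph.starGraph z := by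
  ext x y
  simp only [SimpleGraph.fromEdgeSet_adj, Set.mem_ofPred_eq, SimpleGraph.starGraph_adj, Sym2.eq_iff]
  constructor
  · rintro ⟨⟨c, ⟨rfl, -⟩ | ⟨-, rfl⟩⟩, hne⟩
    · exact ⟨hne, Or.inl rfl⟩
    · exact ⟨hne, Or.inr rfl⟩
  · rintro ⟨hne, rfl | rfl⟩
    · obtain ⟨c, hc⟩ := hf y hne.symm
      exact ⟨⟨c, Or.inl ⟨rfl, hc.symm⟩⟩, hne⟩
    · obtain ⟨c, hc⟩ := hf x hne
      exact ⟨⟨c, Or.inr ⟨hc.symm, rfl⟩⟩, hne⟩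

/-- Once the vertices other than `z` are named by `Fin (n-1)`, star decompositions of the
multigraph all of whose stars are centered at `z` are precisely Latin squares. -/
theorem isStarDecomp_iff_isLatinSquare {n : ℕ} {z : Fin n} (e : {v : Fin n // v ≠ z} ≃ Fin (n-1))
    (M : Fin (n-1) → Fin (n-1) → Fin (n-1)) :
    IsStarDecomp n (fun _ => z) (fun i c => (e.symm (M i c)).1) ↔ IsLatinSquare M := by
  have hinj : Function.Injective fun k => (e.symm k).1 :=
    Subtype.val_injective.comp e.symm.injective
  constructor
  · rintro ⟨⟨-, hcol, -, hrow, -⟩, -⟩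
    -- Injective self-maps of `Fin (n-1)` are bijective.
    refine ⟨fun i => Finite.injective_iff_bijective.1 fun c c' h => ?_,
      fun c => Finite.injective_iff_bijective.1 fun i i' h => ?_⟩
    · exact hrow i (by simp only [h])
    · exact hcol c (by simp only [h])
  · intro hM
    refine ⟨⟨fun i c => (e.symm (M i c)).2, fun c => hinj.comp (hM.2 c).1, fun c v hv => ?_,
      fun i c c' h => ?_, fun i => ?_⟩, fun i => ⟨z, fun c => Sym2.mem_mk_left _ _⟩⟩
    · obtain ⟨i, hi⟩ := (hM.2 c).2 (e ⟨v, hv⟩)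
      exact ⟨i, by simp only at hi; simp [hi]⟩
    · exact (hM.1 i).1 (hinj (Sym2.congr_right.1 h))
    · rw [fromEdgeSet_eq_starGraph z _ _ fun c => (e.symm (M i c)).2]
      · exact SimpleGraph.isTree_starGraph z
      · intro v hv
        obtain ⟨c, hc⟩ := (hM.1 i).2 (e ⟨v, hv⟩)
        exact ⟨c, by simp [hc]⟩

/-- The bijection between star decompositions and Latin squares induced by a naming `e` of the
vertices other than `z`. -/
def starDecompEquiv {n : ℕ} {z : Fin n} (e : {v : Fin n // v ≠ z} ≃ Fin (n-1)) :
    {w : Fin (n-1) → Fin (n-1) → Fin n // IsStarDecomp n (fun _ => z) w} ≃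
      {M : Fin (n-1) → Fin (n-1) → Fin (n-1) // IsLatinSquare M} where
  toFun w := ⟨fun i c => e ⟨w.1 i c, w.2.1.1 i c⟩,
    (isStarDecomp_iff_isLatinSquare e _).1 (by simpa using w.2)⟩
  invFun M := ⟨fun i c => (e.symm (M.1 i c)).1, (isStarDecomp_iff_isLatinSquare e _).2 M.2⟩
  left_inv w := by simp
  right_inv M := by simp

theorem card_star_decomp_orbits_of_constant (n : ℕ) (hn : 2 ≤ n)
    (ctr : Fin (n-1) → Fin n) (z : Fin n) (hconst : ∀ c, ctr c = z) :
    Nat.card (Quot (fun w w' : {w : Fin (n-1) → Fin (n-1) → Fin n // IsStarDecomp n ctr w} =>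
        ∃ σ : Equiv.Perm (Fin (n-1)), ∀ i c, w'.1 i c = w.1 (σ i) c))
      = L (n-1) / Nat.factorial (n-1) ∧ Nat.factorial (n-1) ∣ L (n-1) := by
  obtain rfl : ctr = fun _ => z := funext hconst
  have e : {v : Fin n // v ≠ z} ≃ Fin (n-1) :=
    Fintype.equivFinOfCardEq (by simp [Fintype.card_subtype_compl])
  have hL := L_eq_card_quot_mul_factorial (m := n - 1) (by omega)
  have hQ := Nat.card_congr (Quot.congr (starDecompEquiv e)
    (ra := fun w w' => ∃ σ : Equiv.Perm (Fin (n-1)), ∀ i c, w'.1 i c = w.1 (σ i) c)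
    (rb := RowPermuted) fun w w' => by simp [RowPermuted, starDecompEquiv])
  rw [hQ, hL]
  exact ⟨(Nat.mul_div_cancel _ (Nat.factorial_pos _)).symm, dvd_mul_left _ _⟩
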